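/- Every spanning tree T of G has diameter at least twice the generalized radius of G: D(T) ≥ 2·R_gen(G), where R_gen(G) is the infimum, over edges e = (u,v) of G and α ∈ [0, ω(e)], of max_{z∈V} min(α + d_G(u,z), ω(e) − α + d_G(v,z)). -/

import Mathlib

/-- The weight of a walk: the sum of the weights of its edges. -/
noncomputable def walkWeight {V : Type*} (w : V → V → ℝ) {G : SimpleGraph V} {u v : V}
    (p : G.Walk u v) : ℝ :=
  (p.darts.map fun d => w d.toProd.1 d.toProd.2).sum

/-- The weighted distance between two vertices: the least weight of a walk joining them. -/
noncomputable def wdist {V : Type*} (G : SimpleGraph V) (w : V → V → ℝ) (u v : V) : ℝ :=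
  sInf {x : ℝ | ∃ p : G.Walk u v, walkWeight w p = x}

/-!
Let `m` be the midpoint of the tree path from `u` to `v`, lying on the edge `ab` of `T`. Deleting
`ab` splits `T` in two. A vertex `z` on the side of `b` is reached from `u` only through `m`, so its
distance to `m` via `b` is at most `D(T) - d_T(u,v) / 2`; a vertex on the side of `a` is reached
from `v` only through `m`, which gives the same bound via `a`. Since `d_G ≤ d_T`, it follows that
`R_gen(G) ≤ D(T) - d_T(u,v) / 2`, and taking the supremum over `u` and `v` finishes the proof
without requiring the diameter to be attained.
-/

open SimpleGraph

section Walks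

variable {V : Type*} {G : SimpleGraph V} {a b u v z : V}

lemma exists_eq_append_cons_le_le {R : Type*} [LinearOrder R] (f : V → R) {m : R} (p : G.Walk u v)
    (huv : u ≠ v) (hu : f u ≤ m) (hv : m ≤ f v) :
    ∃ (a b : V) (q : G.Walk u a) (h : G.Adj a b) (r : G.Walk b v),
      p = q.append (.cons h r) ∧ f a ≤ m ∧ m ≤ f b := by
  induction p with
  | nil => exact absurd rfl huv
  | @cons u y v h p ih =>
    rcases le_or_gt m (f y) with hy | hy
    · exact ⟨u, y, .nil, h, p, rfl, hu, hy⟩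
    · have hyv : y ≠ v := fun e => (e ▸ hy).not_ge hv
      obtain ⟨a, b, q, hab, r, rfl, ha, hb⟩ := ih hyv hy.le hv
      exact ⟨a, b, .cons h q, hab, r, rfl, ha, hb⟩

lemma reachable_deleteEdges_of_isTrail_append_cons {q : G.Walk u a} {h : G.Adj a b}
    {r : G.Walk b v} (hp : (q.append (.cons h r)).IsTrail) :
    (G.deleteEdges {s(a, b)}).Reachable u a ∧ (G.deleteEdges {s(a, b)}).Reachable b v := by
  have hnodup := hp.edges_nodup
  simp only [Walk.edges_append, Walk.edges_cons, List.nodup_append, List.nodup_cons] at hnodup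
  obtain ⟨-, ⟨her, -⟩, hdisj⟩ := hnodup
  exact ⟨reachable_deleteEdges_iff_exists_walk.2 ⟨q, fun heq => hdisj _ heq _ (by simp) rfl⟩,
    reachable_deleteEdges_iff_exists_walk.2 ⟨r, her⟩⟩

lemma reachable_deleteEdges_or (h : G.Reachable z a) (b : V) :
    (G.deleteEdges {s(a, b)}).Reachable z a ∨ (G.deleteEdges {s(a, b)}).Reachable z b := by
  obtain ⟨p⟩ := h
  induction p with
  | nil => exact .inl .rfl
  | @cons z y a h p ih =>
    by_cases he : s(z, y) = s(a, b)
    · rcases Sym2.eq_iff.1 he with ⟨rfl, -⟩ | ⟨rfl, -⟩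
      · exact .inl .rfl
      · exact .inr .rfl
    · have hzy : (G.deleteEdges {s(a, b)}).Adj z y := deleteEdges_adj.2 ⟨h, he⟩
      exact ih.imp hzy.reachable.trans hzy.reachable.trans

end Walks

section WeightedDistance

variable {V : Type*} {G T : SimpleGraph V} {w : V → V → ℝ} {a b u v x z : V}

@[simp]
lemma walkWeight_nil : walkWeight w (.nil : G.Walk u u) = 0 := by
  simp [walkWeight]

@[simp]
lemma walkWeight_cons (h : G.Adj u v) (p : G.Walk v x) :
    walkWeight w (.cons h p) = w u v + walkWeight w p := by
  simp [walkWeight]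

lemma walkWeight_append (p : G.Walk u v) (q : G.Walk v x) :
    walkWeight w (p.append q) = walkWeight w p + walkWeight w q := by
  simp [walkWeight]

lemma walkWeight_reverse (hws : ∀ a b, w a b = w b a) (p : G.Walk u v) :
    walkWeight w p.reverse = walkWeight w p := by
  simp [walkWeight, Function.comp_def, List.sum_reverse, hws]

lemma walkWeight_mapLe (hTG : T ≤ G) (p : T.Walk u v) :
    walkWeight w (p.mapLe hTG) = walkWeight w p := by
  simp [walkWeight, Function.comp_def]

lemma walkWeight_nonneg (hw : ∀ a b, G.Adj a b → 0 ≤ w a b) (p : G.Walk u v) :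
    0 ≤ walkWeight w p :=
  List.sum_nonneg <| List.forall_mem_map.2 fun d _ => hw _ _ d.adj

lemma wdist_le_walkWeight (hw : ∀ a b, G.Adj a b → 0 ≤ w a b) (p : G.Walk u v) :
    wdist G w u v ≤ walkWeight w p :=
  csInf_le ⟨0, by rintro _ ⟨q, rfl⟩; exact walkWeight_nonneg hw q⟩ ⟨p, rfl⟩

lemma le_wdist (huv : G.Reachable u v) {c : ℝ} (h : ∀ p : G.Walk u v, c ≤ walkWeight w p) :
    c ≤ wdist G w u v :=
  le_csInf (huv.elim fun p => ⟨_, p, rfl⟩) (by rintro _ ⟨p, rfl⟩; exact h p)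

lemma wdist_nonneg (hw : ∀ a b, G.Adj a b → 0 ≤ w a b) (u v : V) : 0 ≤ wdist G w u v :=
  Real.sInf_nonneg (by rintro _ ⟨p, rfl⟩; exact walkWeight_nonneg hw p)

lemma wdist_self (hw : ∀ a b, G.Adj a b → 0 ≤ w a b) (u : V) : wdist G w u u = 0 :=
  le_antisymm (by simpa using wdist_le_walkWeight hw (.nil : G.Walk u u)) (wdist_nonneg hw u u)

lemma wdist_comm (hws : ∀ a b, w a b = w b a) (u v : V) : wdist G w u v = wdist G w v u := by
  refine congrArg sInf (Set.ext fun x => ⟨?_, ?_⟩) <;>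
    exact fun ⟨p, hp⟩ => ⟨p.reverse, (walkWeight_reverse hws p).trans hp⟩

lemma wdist_triangle (hw : ∀ a b, G.Adj a b → 0 ≤ w a b) (hux : G.Reachable u x)
    (hxv : G.Reachable x v) : wdist G w u v ≤ wdist G w u x + wdist G w x v := by
  rw [← sub_le_iff_le_add]
  refine le_wdist hux fun p => ?_
  rw [sub_le_comm]
  refine le_wdist hxv fun q => ?_
  rw [sub_le_iff_le_add', ← walkWeight_append]
  exact wdist_le_walkWeight hw (p.append q)

lemma wdist_le_of_adj (hw : ∀ a b, G.Adj a b → 0 ≤ w a b) (h : G.Adj u v) :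
    wdist G w u v ≤ w u v := by
  simpa using wdist_le_walkWeight hw h.toWalk

lemma wdist_le_wdist_of_le (hw : ∀ a b, G.Adj a b → 0 ≤ w a b) (hTG : T ≤ G)
    (huv : T.Reachable u v) : wdist G w u v ≤ wdist T w u v :=
  le_wdist huv fun p => walkWeight_mapLe (w := w) hTG p ▸ wdist_le_walkWeight hw (p.mapLe hTG)

lemma wdist_add_add_le_of_isBridge (hw : ∀ a b, G.Adj a b → 0 ≤ w a b) (hab : G.Adj a b)
    (hbridge : G.IsBridge s(a, b)) (hxa : (G.deleteEdges {s(a, b)}).Reachable x a)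
    (hbz : (G.deleteEdges {s(a, b)}).Reachable b z) :
    wdist G w x a + w a b + wdist G w b z ≤ wdist G w x z := by
  have hle : G.deleteEdges {s(a, b)} ≤ G := deleteEdges_le _
  refine le_wdist ((hxa.mono hle).trans (hab.reachable.trans (hbz.mono hle))) fun p => ?_
  induction p with
  | nil => exact absurd (hxa.symm.trans hbz.symm) hbridge
  | @cons x y z h p ih =>
    rw [walkWeight_cons]
    by_cases he : s(x, y) = s(a, b)
    · rcases Sym2.eq_iff.1 he with ⟨rfl, rfl⟩ | ⟨rfl, -⟩
      · rw [wdist_self hw, zero_add]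
        gcongr
        exact wdist_le_walkWeight hw p
      · exact absurd hxa.symm hbridge
    · have hxy : (G.deleteEdges {s(a, b)}).Adj x y := deleteEdges_adj.2 ⟨h, he⟩
      have hya := hxy.reachable.symm.trans hxa
      calc wdist G w x a + w a b + wdist G w b z
          ≤ w x y + wdist G w y a + w a b + wdist G w b z := by
            gcongr
            exact (wdist_triangle hw h.reachable (hya.mono hle)).trans
              (by gcongr; exact wdist_le_of_adj hw h)
        _ ≤ w x y + walkWeight w p := by linarith [ih hya hbz]

lemma exists_adj_wdist_add_eq_half (hw : ∀ a b, G.Adj a b → 0 ≤ w a b) (huv : u ≠ v)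
    (hr : G.Reachable u v) :
    ∃ a b, G.Adj a b ∧ (G.deleteEdges {s(a, b)}).Reachable u a ∧
      (G.deleteEdges {s(a, b)}).Reachable b v ∧
      ∃ α ∈ Set.Icc 0 (w a b), wdist G w u a + α = wdist G w u v / 2 := by
  obtain ⟨p, hp⟩ := hr.exists_isPath
  have hnonneg := wdist_nonneg hw u v
  obtain ⟨a, b, q, hab, r, rfl, ha, hb⟩ :=
    exists_eq_append_cons_le_le (wdist G w u) (m := wdist G w u v / 2) p huv
      (by rw [wdist_self hw]; positivity) (by linarith)
  obtain ⟨hua, hbv⟩ := reachable_deleteEdges_of_isTrail_append_cons hp.isTrail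
  have hstep : wdist G w u b ≤ wdist G w u a + w a b :=
    (wdist_triangle hw ⟨q⟩ hab.reachable).trans (by gcongr; exact wdist_le_of_adj hw hab)
  exact ⟨a, b, hab, hua, hbv, wdist G w u v / 2 - wdist G w u a,
    ⟨by linarith, by linarith⟩, by ring⟩

end WeightedDistance

section GeneralizedRadius

variable {V : Type*} {G T : SimpleGraph V} {w : V → V → ℝ} {a b u v : V}

/-- The diameter `D(G)` of a weighted graph. It has the junk value `0` if the distances are
unbounded. -/
noncomputable def wdiam (G : SimpleGraph V) (w : V → V → ℝ) : ℝ :=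
  ⨆ u : V, ⨆ v : V, wdist G w u v

/-- The quantity `B_e(α)`: the eccentricity of the point at distance `α` from `a` on the edge
`e = (a, b)`. It is meaningful for `G.Adj a b` and `α ∈ [0, w a b]`, which the definition does not
enforce. -/
noncomputable def edgePointEcc (G : SimpleGraph V) (w : V → V → ℝ) (a b : V) (α : ℝ) : ℝ :=
  ⨆ z : V, min (α + wdist G w a z) (w a b - α + wdist G w b z)

/-- The generalized radius `R_gen(G)`: the least eccentricity of a point on an edge of `G`. It has
the junk value `0` if `G` has no edges. -/
noncomputable def genRadius (G : SimpleGraph V) (w : V → V → ℝ) : ℝ :=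
  sInf {x : ℝ | ∃ a b : V, G.Adj a b ∧ ∃ α ∈ Set.Icc 0 (w a b), x = edgePointEcc G w a b α}

lemma genRadius_le_edgePointEcc (hw : ∀ a b, G.Adj a b → 0 ≤ w a b) (hab : G.Adj a b) {α : ℝ}
    (hα : α ∈ Set.Icc 0 (w a b)) : genRadius G w ≤ edgePointEcc G w a b α := by
  refine csInf_le ⟨0, ?_⟩ ⟨a, b, hab, α, hα, rfl⟩
  rintro _ ⟨a, b, -, α, ⟨h0, h1⟩, rfl⟩
  exact Real.iSup_nonneg fun z =>
    le_min (add_nonneg h0 (wdist_nonneg hw a z))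
      (add_nonneg (sub_nonneg.2 h1) (wdist_nonneg hw b z))

lemma edgePointEcc_le_of_isBridge (hw : ∀ a b, G.Adj a b → 0 ≤ w a b)
    (hws : ∀ a b, w a b = w b a) (hTG : T ≤ G) (hT : T.Preconnected) (hab : T.Adj a b)
    (hbridge : T.IsBridge s(a, b)) (hua : (T.deleteEdges {s(a, b)}).Reachable u a)
    (hbv : (T.deleteEdges {s(a, b)}).Reachable b v) {α D : ℝ}
    (hα : wdist T w u a + α = wdist T w u v / 2) (hD : ∀ x y, wdist T w x y ≤ D) :
    edgePointEcc G w a b α ≤ D - wdist T w u v / 2 := by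
  have hwT : ∀ a b, T.Adj a b → 0 ≤ w a b := fun a b h => hw a b (hTG h)
  have : Nonempty V := ⟨a⟩
  refine ciSup_le fun z => ?_
  rcases reachable_deleteEdges_or (hT z a) b with hza | hzb
  · refine (min_le_left _ _).trans ?_
    have hthrough : wdist T w z a + w a b + wdist T w b v ≤ wdist T w z v :=
      wdist_add_add_le_of_isBridge hwT hab hbridge hza hbv
    have huv : wdist T w u v ≤ wdist T w u a + w a b + wdist T w b v := by
      linarith [wdist_triangle hwT (hT u a) (hT a v), wdist_triangle hwT (hT a b) (hT b v),
        wdist_le_of_adj hwT hab]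
    have hGT : wdist G w a z ≤ wdist T w z a :=
      (wdist_le_wdist_of_le hw hTG (hT a z)).trans_eq (wdist_comm hws a z)
    linarith [hD z v]
  · refine (min_le_right _ _).trans ?_
    have hthrough : wdist T w u a + w a b + wdist T w b z ≤ wdist T w u z :=
      wdist_add_add_le_of_isBridge hwT hab hbridge hua hzb.symm
    linarith [hD u z, wdist_le_wdist_of_le hw hTG (hT b z)]

lemma genRadius_le_sub_half_wdist (hw : ∀ a b, G.Adj a b → 0 ≤ w a b)
    (hws : ∀ a b, w a b = w b a) (hTG : T ≤ G) (hT : T.IsTree) (huv : u ≠ v) {D : ℝ}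
    (hD : ∀ x y, wdist T w x y ≤ D) : genRadius G w ≤ D - wdist T w u v / 2 := by
  have hpre : T.Preconnected := hT.connected.preconnected
  obtain ⟨a, b, hab, hua, hbv, α, hα, hmid⟩ :=
    exists_adj_wdist_add_eq_half (fun a b h => hw a b (hTG h)) huv (hpre u v)
  have hbridge : T.IsBridge s(a, b) := isAcyclic_iff_forall_adj_isBridge.1 hT.isAcyclic hab
  exact (genRadius_le_edgePointEcc hw (hTG hab) hα).trans
    (edgePointEcc_le_of_isBridge hw hws hTG hpre hab hbridge hua hbv hmid hD)

theorem stmt15_general [Nontrivial V] (hw : ∀ a b, G.Adj a b → 0 ≤ w a b)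
    (hws : ∀ a b, w a b = w b a) (hTG : T ≤ G) (hT : T.IsTree)
    (hbdd : BddAbove (⋃ u, Set.range (wdist T w u))) :
    2 * genRadius G w ≤ wdiam T w := by
  have hD : ∀ u v, wdist T w u v ≤ wdiam T w := le_ciSup₂ hbdd
  have hwT : ∀ a b, T.Adj a b → 0 ≤ w a b := fun a b h => hw a b (hTG h)
  have hdiam : wdiam T w ≤ 2 * (wdiam T w - genRadius G w) := by
    refine ciSup_le fun u => ciSup_le fun v => ?_
    rcases eq_or_ne u v with rfl | huv
    · obtain ⟨v, hvu⟩ := exists_ne u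
      linarith [genRadius_le_sub_half_wdist hw hws hTG hT hvu hD, wdist_self hwT u,
        wdist_nonneg hwT v u]
    · linarith [genRadius_le_sub_half_wdist hw hws hTG hT huv hD]
  linarith

end GeneralizedRadius

/-- Every spanning tree `T` of `G` has diameter at least twice the generalized
radius of `G`: `D(T) ≥ 2 · R_gen(G)`, where `R_gen(G)` is the infimum over
edges `e = (u,v)` of `G` and `α ∈ [0, ω(u,v)]` of
`B_e(α) = max_{z ∈ V} min (α + d_G(u,z)) (ω(u,v) - α + d_G(v,z))`. -/
theorem stmt15 {V : Type*} [Fintype V] (G : SimpleGraph V) (hG : G.Connected)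
    (w : V → V → ℝ) (hw : ∀ a b : V, G.Adj a b → 0 < w a b)
    (hws : ∀ a b : V, w a b = w b a)
    (hE : ∃ a b : V, G.Adj a b)
    (T : SimpleGraph V) (hTG : T ≤ G) (hT : T.IsTree) :
    2 * sInf {x : ℝ | ∃ a b : V, G.Adj a b ∧ ∃ α ∈ Set.Icc 0 (w a b),
        x = ⨆ z : V, min (α + wdist G w a z) (w a b - α + wdist G w b z)} ≤
      ⨆ u : V, ⨆ v : V, wdist T w u v := by
  have : Nontrivial V := hE.elim fun a ⟨b, hab⟩ => ⟨a, b, hab.ne⟩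
  exact stmt15_general (fun a b h => (hw a b h).le) hws hTG hT
    (Set.finite_iUnion fun _ => Set.finite_range _).bddAbove
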